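/- Let G be a group, A ⊆ G finite nonempty, A' ⊆ A with |A'| ≥ c|A| and |A'A| ≤ K|A|, where c ∈ (0,1] and K ≥ 1. Define L := {t ∈ G : |A' ∩ tA'| ≥ |A'|⁴/(2|A'A||A|²)}. Then |L| ≥ |A'|³/(2|A'A||A|) ≥ c³|A|/(2K). -/

import Mathlib

open Finset Pointwise

/-! Sorting the solutions of `a₁ b₁ = a₂ b₂` by `t = a₂⁻¹ a₁` writes the multiplicative energy
of `A` and `B` as `∑ r(t) |B ∩ tB|`, where `r(t)` counts the representations of `t` in `A⁻¹A`.
By Cauchy–Schwarz this energy is at least `|A|² |B|² / |AB|`. The `t` with `|B ∩ tB| < τ`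
contribute at most `τ ∑ r(t) = τ |A|²`, which is at most half of that bound once
`τ ≤ |B|² / (2 |AB|)`; each remaining `t` contributes at most `|A| |B|`, so there are at least
`|A| |B| / (2 |AB|)` of them. The theorem is the case where both sets are `A'`, as `|A'| ≤ |A|`
and `|A'A'| ≤ |A'A|`. -/

section SymmetrySet

variable {G : Type*} [Group G] [DecidableEq G]

/-- The symmetry set of `B` at threshold `τ`: the elements `t` whose left translate `t • B` meets
`B` in at least `τ` points. These are the popular quotients of `B`. Unlike the usual `Sym_α(B)`,
the threshold is absolute and not a proportion of `#B`. -/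
def symmetrySet (B : Finset G) (τ : ℝ) : Set G := {t | τ ≤ #(B ∩ t • B)}

lemma symmetrySet_subset_div (B : Finset G) {τ : ℝ} (hτ : 0 < τ) :
    symmetrySet B τ ⊆ ↑(B / B) := by
  intro t ht
  have hpos : 0 < #(B ∩ t • B) := by exact_mod_cast hτ.trans_le ht
  rwa [card_inter_smul, convolution_pos, ← div_eq_mul_inv] at hpos

lemma finite_symmetrySet (B : Finset G) {τ : ℝ} (hτ : 0 < τ) : (symmetrySet B τ).Finite :=
  (B / B).finite_toSet.subset (symmetrySet_subset_div B hτ)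

lemma sum_convolution (A B : Finset G) : ∑ x ∈ A * B, A.convolution B x = #A * #B := by
  rw [← card_product]
  exact (card_eq_sum_card_fiberwise fun p hp ↦
    mul_mem_mul (mem_product.1 hp).1 (mem_product.1 hp).2).symm

-- A solution of `a₁ * b₁ = a₂ * b₂` with `a₂⁻¹ * a₁ = t` is determined by `(a₂⁻¹, a₁)` and by
-- `b₂ = t * b₁`, which ranges over `B ∩ t • B`.
lemma card_mul_eq_mul_and_inv_mul_eq (A B : Finset G) (t : G) :
    #{x ∈ (A ×ˢ A) ×ˢ B ×ˢ B | x.1.1 * x.2.1 = x.1.2 * x.2.2 ∧ x.1.2⁻¹ * x.1.1 = t} =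
      A⁻¹.convolution A t * #(B ∩ t • B) := by
  rw [convolution, ← card_product]
  refine card_nbij' (fun x ↦ ((x.1.2⁻¹, x.1.1), x.2.2))
    (fun y ↦ ((y.1.2, y.1.1⁻¹), (t⁻¹ * y.2, y.2))) ?_ ?_ ?_ ?_
  · rintro ⟨⟨a₁, a₂⟩, b₁, b₂⟩ hx
    simp only [coe_filter, mem_product, Set.mem_ofPred_eq] at hx
    obtain ⟨⟨⟨ha₁, ha₂⟩, hb₁, hb₂⟩, h, rfl⟩ := hx
    have hb : (a₂⁻¹ * a₁) • b₁ = b₂ := by rw [smul_eq_mul, mul_assoc, h, inv_mul_cancel_left]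
    have hbB : b₂ ∈ (a₂⁻¹ * a₁) • B := hb ▸ smul_mem_smul_finset hb₁
    simp only [coe_product, Set.mem_prod, mem_coe, mem_filter, mem_product, mem_inter,
      inv_mem_inv, ha₁, ha₂, hb₂, hbB, and_self]
  · rintro ⟨⟨a₂', a₁⟩, b₂⟩ hy
    simp only [coe_product, coe_filter, Set.mem_prod, Set.mem_ofPred_eq, mem_product, mem_coe,
      mem_inter, ← inv_smul_mem_iff, smul_eq_mul, mem_inv'] at hy
    obtain ⟨⟨⟨ha₂, ha₁⟩, rfl⟩, hb₂, hb₁⟩ := hy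
    simp_all [mul_assoc]
  · rintro ⟨⟨a₁, a₂⟩, b₁, b₂⟩ hx
    simp only [coe_filter, mem_product, Set.mem_ofPred_eq] at hx
    obtain ⟨_, h, rfl⟩ := hx
    simp [mul_assoc, ← h]
  · rintro ⟨⟨a₂', a₁⟩, b₂⟩ _
    simp

lemma mulEnergy_eq_sum_convolution_mul_card_inter_smul (A B : Finset G) :
    mulEnergy A B = ∑ t ∈ A⁻¹ * A, A⁻¹.convolution A t * #(B ∩ t • B) := by
  rw [mulEnergy, card_eq_sum_card_fiberwise (f := fun x ↦ x.1.2⁻¹ * x.1.1) (t := A⁻¹ * A)]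
  · simp only [filter_filter, card_mul_eq_mul_and_inv_mul_eq]
  · rintro ⟨⟨a₁, a₂⟩, b₁, b₂⟩ hx
    simp only [coe_filter, mem_product, Set.mem_ofPred_eq] at hx
    exact mul_mem_mul (inv_mem_inv hx.1.1.2) hx.1.1.1

lemma mulEnergy_le_card_mul_ncard_symmetrySet_add (A B : Finset G) {τ : ℝ} (hτ : 0 < τ) :
    (mulEnergy A B : ℝ) ≤ #A * #B * (symmetrySet B τ).ncard + #A ^ 2 * τ := by
  classical
  let r (t : G) : ℝ := A⁻¹.convolution A t
  have hr_le (t : G) : r t ≤ #A := Nat.cast_le.2 convolution_le_card_right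
  have hr_sum : ∑ t ∈ A⁻¹ * A, r t = #A ^ 2 := by
    simp only [r, ← Nat.cast_sum, sum_convolution, card_inv, Nat.cast_mul, sq]
  have hterm (t : G) : r t * #(B ∩ t • B) ≤
      (if t ∈ symmetrySet B τ then (#A * #B : ℝ) else 0) + r t * τ := by
    have hr : 0 ≤ r t := Nat.cast_nonneg _
    split_ifs with ht
    · have : r t * #(B ∩ t • B) ≤ #A * #B := by
        gcongr
        exacts [hr_le t, inter_subset_left]
      linarith [mul_nonneg hr hτ.le]
    · rw [zero_add]
      exact mul_le_mul_of_nonneg_left (not_le.1 ht).le hr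
  have hcard : #{t ∈ A⁻¹ * A | t ∈ symmetrySet B τ} ≤ (symmetrySet B τ).ncard := by
    rw [← Set.ncard_coe_finset]
    exact Set.ncard_le_ncard (fun t ht ↦ (mem_filter.1 ht).2) (finite_symmetrySet B hτ)
  calc (mulEnergy A B : ℝ) = ∑ t ∈ A⁻¹ * A, r t * #(B ∩ t • B) := by
        simp only [r]
        exact_mod_cast mulEnergy_eq_sum_convolution_mul_card_inter_smul A B
    _ ≤ ∑ t ∈ A⁻¹ * A, ((if t ∈ symmetrySet B τ then (#A * #B : ℝ) else 0) + r t * τ) :=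
        sum_le_sum fun t _ ↦ hterm t
    _ = #A * #B * #{t ∈ A⁻¹ * A | t ∈ symmetrySet B τ} + #A ^ 2 * τ := by
        rw [sum_add_distrib, ← sum_mul, hr_sum, ← sum_filter, sum_const, nsmul_eq_mul, mul_comm]
    _ ≤ #A * #B * (symmetrySet B τ).ncard + #A ^ 2 * τ := by gcongr

lemma card_mul_card_le_two_mul_card_mul_mul_ncard_symmetrySet (A B : Finset G) {τ : ℝ}
    (hτ : 0 < τ) (hτB : 2 * #(A * B) * τ ≤ (#B : ℝ) ^ 2) :
    (#A * #B : ℝ) ≤ 2 * #(A * B) * (symmetrySet B τ).ncard := by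
  obtain h | h := (show (0 : ℝ) ≤ #A * #B by positivity).eq_or_lt
  · rw [← h]
    positivity
  have henergy : (#A : ℝ) ^ 2 * #B ^ 2 ≤ #(A * B) * mulEnergy A B := by
    exact_mod_cast le_card_mul_mul_mulEnergy A B
  have hsplit : (#(A * B) : ℝ) * mulEnergy A B ≤
      #(A * B) * (#A * #B * (symmetrySet B τ).ncard + #A ^ 2 * τ) := by
    gcongr
    exact mulEnergy_le_card_mul_ncard_symmetrySet_add A B hτ
  have hunpopular : (#A : ℝ) ^ 2 * (2 * #(A * B) * τ) ≤ #A ^ 2 * #B ^ 2 := by gcongr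
  refine le_of_mul_le_mul_left ?_ h
  linarith

lemma card_pow_three_div_le_ncard_symmetrySet {A A' : Finset G} (hA' : A'.Nonempty)
    (hsub : A' ⊆ A) :
    (#A' : ℝ) ^ 3 / (2 * #(A' * A) * #A) ≤
      (symmetrySet A' ((#A' : ℝ) ^ 4 / (2 * #(A' * A) * (#A : ℝ) ^ 2))).ncard := by
  have hA : A.Nonempty := hA'.mono hsub
  have : (A' * A).Nonempty := hA'.mul hA
  have hmn : (#A' : ℝ) ≤ #A := by exact_mod_cast card_le_card hsub
  have hPP : (#(A' * A') : ℝ) ≤ #(A' * A) := by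
    exact_mod_cast card_le_card (mul_subset_mul_left hsub)
  set τ : ℝ := (#A' : ℝ) ^ 4 / (2 * #(A' * A) * (#A : ℝ) ^ 2) with hτ
  have hτA' : 2 * #(A' * A') * τ ≤ (#A' : ℝ) ^ 2 := by
    rw [hτ, mul_div_assoc', div_le_iff₀ (by positivity)]
    calc 2 * #(A' * A') * (#A' : ℝ) ^ 4 = 2 * #(A' * A') * ((#A' : ℝ) ^ 2 * (#A' : ℝ) ^ 2) := by
          ring
      _ ≤ 2 * #(A' * A) * ((#A' : ℝ) ^ 2 * (#A : ℝ) ^ 2) := by gcongr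
      _ = (#A' : ℝ) ^ 2 * (2 * #(A' * A) * (#A : ℝ) ^ 2) := by ring
  have hpopular : (#A' : ℝ) * #A' ≤ 2 * #(A' * A') * (symmetrySet A' τ).ncard :=
    card_mul_card_le_two_mul_card_mul_mul_ncard_symmetrySet A' A' (by positivity) hτA'
  rw [div_le_iff₀ (by positivity)]
  calc (#A' : ℝ) ^ 3 = #A' * #A' * #A' := by ring
    _ ≤ 2 * #(A' * A') * (symmetrySet A' τ).ncard * #A' := by gcongr
    _ ≤ 2 * #(A' * A) * (symmetrySet A' τ).ncard * #A := by gcongr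
    _ = (symmetrySet A' τ).ncard * (2 * #(A' * A) * #A) := by ring

end SymmetrySet

theorem stmt10 {G : Type*} [Group G] [DecidableEq G] (A A' : Finset G)
    (hA : A.Nonempty) (hsub : A' ⊆ A) (c K : ℝ) (hc0 : 0 < c) (hc1 : c ≤ 1)
    (hK : 1 ≤ K) (hA'c : c * A.card ≤ (A'.card : ℝ))
    (hA'A : ((A' * A).card : ℝ) ≤ K * A.card) :
    ((A'.card : ℝ)) ^ 3 / (2 * ((A' * A).card : ℝ) * A.card) ≤
      (Nat.card {t : G |
        ((A'.card : ℝ)) ^ 4 / (2 * ((A' * A).card : ℝ) * (A.card : ℝ) ^ 2) ≤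
          ((A' ∩ t • A').card : ℝ)} : ℝ) ∧
    c ^ 3 * A.card / (2 * K) ≤
      ((A'.card : ℝ)) ^ 3 / (2 * ((A' * A).card : ℝ) * A.card) := by
  have hn : (0 : ℝ) < #A := by exact_mod_cast hA.card_pos
  have hm : (0 : ℝ) < #A' := (mul_pos hc0 hn).trans_le hA'c
  have hA' : A'.Nonempty := card_pos.1 (by exact_mod_cast hm)
  have : (A' * A).Nonempty := hA'.mul hA
  refine ⟨card_pow_three_div_le_ncard_symmetrySet hA' hsub, ?_⟩
  rw [div_le_div_iff₀ (by positivity) (by positivity)]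
  calc c ^ 3 * #A * (2 * #(A' * A) * #A) ≤ c ^ 3 * #A * (2 * (K * #A) * #A) := by gcongr
    _ = (c * #A) ^ 3 * (2 * K) := by ring
    _ ≤ (#A' : ℝ) ^ 3 * (2 * K) := by gcongr
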